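/- Let ℋ be a finite-dimensional complex inner product space, N ≥ 2, U_0, …, U_{N−2} unitary operators on ℋ, and 𝒞 the associated clock operator on ℂ^N ⊗ ℋ. Define 𝒜 = 𝒞 + |0⟩⟨0| ⊗ I. If ψ_0, …, ψ_{N−1} ∈ ℋ satisfy ψ_{n+1} = U_n ψ_n for all 0 ≤ n ≤ N−2, then the history state Ψ = ∑_{n=0}^{N−1} |n⟩ ⊗ ψ_n satisfies 𝒜 Ψ = |0⟩ ⊗ ψ_0. -/

import Mathlib

open scoped TensorProduct

/-- The rank-one operator `|m⟩⟨n|` on `ℂ^N`, where `|0⟩, …, |N−1⟩` is the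
standard orthonormal basis of `ℂ^N`. -/
noncomputable def ketbra (N : ℕ) (m n : Fin N) :
    EuclideanSpace ℂ (Fin N) →ₗ[ℂ] EuclideanSpace ℂ (Fin N) :=
  (LinearMap.toSpanSingleton ℂ (EuclideanSpace ℂ (Fin N))
      (EuclideanSpace.single m 1)).comp
    ((innerSL ℂ (EuclideanSpace.single n (1 : ℂ))).toLinearMap)

/-- The Feynman clock operator
`𝒞 = ∑_{n=0}^{N−2} (|n+1⟩⟨n+1| ⊗ I − |n+1⟩⟨n| ⊗ U_n + |n⟩⟨n| ⊗ I
  − |n⟩⟨n+1| ⊗ U_n†)` on `ℂ^N ⊗ ℋ`. -/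
noncomputable def clockOp {H : Type*} [NormedAddCommGroup H]
    [InnerProductSpace ℂ H] [FiniteDimensional ℂ H]
    (N : ℕ) (U : ℕ → (H →ₗ[ℂ] H)) :
    (EuclideanSpace ℂ (Fin N)) ⊗[ℂ] H →ₗ[ℂ] (EuclideanSpace ℂ (Fin N)) ⊗[ℂ] H :=
  ∑ n ∈ (Finset.range (N - 1)).attach,
    (TensorProduct.map
        (ketbra N ⟨n.1 + 1, by have := Finset.mem_range.mp n.2; omega⟩
                  ⟨n.1 + 1, by have := Finset.mem_range.mp n.2; omega⟩)
        LinearMap.id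
      - TensorProduct.map
        (ketbra N ⟨n.1 + 1, by have := Finset.mem_range.mp n.2; omega⟩
                  ⟨n.1, by have := Finset.mem_range.mp n.2; omega⟩)
        (U n.1)
      + TensorProduct.map
        (ketbra N ⟨n.1, by have := Finset.mem_range.mp n.2; omega⟩
                  ⟨n.1, by have := Finset.mem_range.mp n.2; omega⟩)
        LinearMap.id
      - TensorProduct.map
        (ketbra N ⟨n.1, by have := Finset.mem_range.mp n.2; omega⟩
                  ⟨n.1 + 1, by have := Finset.mem_range.mp n.2; omega⟩)
        (LinearMap.adjoint (U n.1)))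

theorem ketbra_hist {H : Type*} [NormedAddCommGroup H] [InnerProductSpace ℂ H]
    (N : ℕ) (m k : Fin N) (T : H →ₗ[ℂ] H) (ψ : ℕ → H) :
    TensorProduct.map (ketbra N m k) T
      (∑ n : Fin N, (EuclideanSpace.single n (1 : ℂ)) ⊗ₜ[ℂ] ψ n.1)
      = (EuclideanSpace.single m (1 : ℂ)) ⊗ₜ[ℂ] T (ψ k.1) := by
  rw [map_sum, Finset.sum_eq_single k]
  · simp [ketbra]
  · intro b _ hb
    simp [ketbra, EuclideanSpace.inner_single_left, hb.symm]
  · simp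

/-- With `𝒜 = 𝒞 + |0⟩⟨0| ⊗ I`, if `ψ_{n+1} = U_n ψ_n` for all `0 ≤ n ≤ N−2`
with `U_n` unitary, then the history state `Ψ = ∑_{n=0}^{N−1} |n⟩ ⊗ ψ_n`
satisfies `𝒜 Ψ = |0⟩ ⊗ ψ_0`. -/
theorem clockOp_plus_projector_history_state {H : Type*} [NormedAddCommGroup H]
    [InnerProductSpace ℂ H] [FiniteDimensional ℂ H]
    (N : ℕ) (hN : 2 ≤ N) (U : ℕ → (H →ₗ[ℂ] H))
    (hU : ∀ n ≤ N - 2,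
      LinearMap.adjoint (U n) ∘ₗ U n = LinearMap.id ∧
      U n ∘ₗ LinearMap.adjoint (U n) = LinearMap.id)
    (ψ : ℕ → H) (hψ : ∀ n ≤ N - 2, ψ (n + 1) = U n (ψ n))
    (𝒜 : (EuclideanSpace ℂ (Fin N)) ⊗[ℂ] H →ₗ[ℂ] (EuclideanSpace ℂ (Fin N)) ⊗[ℂ] H)
    (h𝒜 : 𝒜 = clockOp N U
      + TensorProduct.map
          (ketbra N ⟨0, by omega⟩ ⟨0, by omega⟩) LinearMap.id) :
    𝒜 (∑ n : Fin N, (EuclideanSpace.single n (1 : ℂ)) ⊗ₜ[ℂ] ψ n.1)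
      = (EuclideanSpace.single (⟨0, by omega⟩ : Fin N) (1 : ℂ)) ⊗ₜ[ℂ] ψ 0 := by
  subst h𝒜
  rw [LinearMap.add_apply, ketbra_hist, clockOp, LinearMap.sum_apply,
    Finset.sum_eq_zero, zero_add, LinearMap.id_apply]
  intro n _
  have hn : n.1 ≤ N - 2 := by
    have := Finset.mem_range.mp n.2
    omega
  have h1 : LinearMap.adjoint (U n.1) (ψ (n.1 + 1)) = ψ n.1 := by
    rw [hψ _ hn]
    exact LinearMap.congr_fun (hU _ hn).1 (ψ n.1)
  simp only [LinearMap.sub_apply, LinearMap.add_apply, ketbra_hist, LinearMap.id_apply]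
  rw [h1, ← hψ _ hn]
  abel
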